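/- Interior tangency principle for constant-mean-curvature graphs: Let Ω ⊆ ℝ² be an open connected set, p₀ ∈ Ω, and let u, v : Ω → ℝ be C² functions such that u ≥ v on Ω and u(p₀) = v(p₀). Suppose there are real constants H₁ and H₂ with H₁ ≤ H₂ such that div(∇u/√(1+|∇u|²)) = 2H₁ on Ω and div(∇v/√(1+|∇v|²)) = 2H₂ on Ω. Then u and v coincide on some open neighborhood of p₀ (and in particular H₁ = H₂). -/

import Mathlib

open Real

/-- The divergence of a vector field on the Euclidean plane. -/
noncomputable def vecDiv (F : EuclideanSpace ℝ (Fin 2) → EuclideanSpace ℝ (Fin 2))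
    (x : EuclideanSpace ℝ (Fin 2)) : ℝ :=
  ∑ i, fderiv ℝ F x (EuclideanSpace.single i 1) i

/-- The mean curvature operator `div (∇u / √(1 + |∇u|²))` for a graph. -/
noncomputable def cmcOp (u : EuclideanSpace ℝ (Fin 2) → ℝ)
    (x : EuclideanSpace ℝ (Fin 2)) : ℝ :=
  vecDiv (fun y => (Real.sqrt (1 + ‖gradient u y‖ ^ 2))⁻¹ • gradient u y) x

/-!
The mean curvature operator has the form `Q (∇u, D²u)` with `Q` linear and elliptic in the Hessian
and smooth in the gradient, so where `cmcOp u ≤ cmcOp v` the difference `w = u - v ≥ 0` satisfies a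
linear elliptic inequality `L (D²w) ≤ C |∇w|`. If `w` vanished at `p₀` but not identically nearby,
some ball would meet the zero set of `w` at a single boundary point. Subtracting from `w` a small
Gaussian bump about the centre of that ball then creates a local minimum near the contact point,
and there the first- and second-order conditions contradict the inequality once the bump is steep.
-/

open Filter Metric Set
open scoped Topology Gradient

section SecondDerivative

theorem deriv_deriv_nonneg_of_isLocalMin {f : ℝ → ℝ} {a : ℝ} (hf : ContinuousAt f a)
    (hmin : IsLocalMin f a) : 0 ≤ deriv (deriv f) a := by
  by_contra! hneg
  have hmax : IsLocalMax f a := isLocalMax_of_deriv_deriv_neg hneg hmin.deriv_eq_zero hf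
  have hconst : f =ᶠ[𝓝 a] fun _ ↦ f a := by
    filter_upwards [hmin, hmax] with t hge hle using le_antisymm hle hge
  simp [hconst.deriv.deriv_eq] at hneg

variable {E : Type*} [NormedAddCommGroup E] [NormedSpace ℝ E] {f g : E → ℝ} {x : E}

theorem hasFDerivAt_fderiv_of_contDiffAt (hf : ContDiffAt ℝ 2 f x) :
    HasFDerivAt (fderiv ℝ f) (fderiv ℝ (fderiv ℝ f) x) x :=
  ((hf.fderiv_right (m := 1) (by norm_num)).differentiableAt one_ne_zero).hasFDerivAt

theorem fderiv_sub_eventuallyEq (hf : ContDiffAt ℝ 2 f x) (hg : ContDiffAt ℝ 2 g x) :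
    fderiv ℝ (f - g) =ᶠ[𝓝 x] fderiv ℝ f - fderiv ℝ g := by
  filter_upwards [hf.eventually (by simp), hg.eventually (by simp)] with y hfy hgy
  exact fderiv_sub (hfy.differentiableAt two_ne_zero) (hgy.differentiableAt two_ne_zero)

theorem fderiv_fderiv_sub (hf : ContDiffAt ℝ 2 f x) (hg : ContDiffAt ℝ 2 g x) :
    fderiv ℝ (fderiv ℝ (f - g)) x = fderiv ℝ (fderiv ℝ f) x - fderiv ℝ (fderiv ℝ g) x :=
  (fderiv_sub_eventuallyEq hf hg).fderiv_eq.trans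
    ((hasFDerivAt_fderiv_of_contDiffAt hf).sub (hasFDerivAt_fderiv_of_contDiffAt hg)).fderiv

theorem deriv_deriv_comp_add_smul (hf : ContDiffAt ℝ 2 f x) (ξ : E) :
    deriv (deriv fun t : ℝ ↦ f (x + t • ξ)) 0 = fderiv ℝ (fderiv ℝ f) x ξ ξ := by
  have hline (t : ℝ) : HasDerivAt (fun t : ℝ ↦ x + t • ξ) ξ t := by
    simpa using ((hasDerivAt_id t).smul_const ξ).const_add x
  have hline_tendsto : Tendsto (fun t : ℝ ↦ x + t • ξ) (𝓝 0) (𝓝 x) := by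
    simpa using (hline 0).continuousAt.tendsto
  have hfirst : deriv (fun t : ℝ ↦ f (x + t • ξ)) =ᶠ[𝓝 0] fun t ↦ fderiv ℝ f (x + t • ξ) ξ := by
    filter_upwards [hline_tendsto.eventually (hf.eventually (by simp))] with t ht
    exact ((ht.differentiableAt two_ne_zero).hasFDerivAt.comp_hasDerivAt t (hline t)).deriv
  have hsecond : HasDerivAt (fun t : ℝ ↦ fderiv ℝ f (x + t • ξ))
      (fderiv ℝ (fderiv ℝ f) x ξ) 0 :=
    HasFDerivAt.comp_hasDerivAt 0 (by simpa using hasFDerivAt_fderiv_of_contDiffAt hf) (hline 0)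
  rw [hfirst.deriv_eq]
  simpa using (hsecond.clm_apply (hasDerivAt_const 0 ξ)).deriv

theorem fderiv_fderiv_apply_self_nonneg_of_isLocalMin (hf : ContDiffAt ℝ 2 f x)
    (hmin : IsLocalMin f x) (ξ : E) : 0 ≤ fderiv ℝ (fderiv ℝ f) x ξ ξ := by
  have hline : ContinuousAt (fun t : ℝ ↦ x + t • ξ) 0 := by fun_prop
  have hf' : ContinuousAt (fun t : ℝ ↦ f (x + t • ξ)) 0 :=
    ContinuousAt.comp (by simpa using hf.continuousAt) hline
  have hmin' : IsLocalMin (fun t : ℝ ↦ f (x + t • ξ)) 0 :=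
    IsLocalMin.comp_continuous (by simpa using hmin) hline
  exact deriv_deriv_comp_add_smul hf ξ ▸ deriv_deriv_nonneg_of_isLocalMin hf' hmin'

end SecondDerivative

section Barrier

section NormedGroup

variable {E : Type*} [NormedAddCommGroup E]

/-- The Gaussian bump `ε exp (-α |x - c|²)` of amplitude `ε`, decay rate `α` and centre `c`: Hopf's
comparison function, up to an additive constant. -/
noncomputable def gaussianBump (ε α : ℝ) (c x : E) : ℝ :=
  ε * exp (-α * ‖x - c‖ ^ 2)

variable {ε α : ℝ}

theorem gaussianBump_pos (hε : 0 < ε) (α : ℝ) (c x : E) : 0 < gaussianBump ε α c x :=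
  mul_pos hε (exp_pos _)

theorem gaussianBump_le (hε : 0 ≤ ε) (hα : 0 ≤ α) (c x : E) : gaussianBump ε α c x ≤ ε :=
  mul_le_of_le_one_right hε (exp_le_one_iff.2 (by rw [neg_mul, neg_nonpos]; positivity))

theorem gaussianBump_lt_of_dist_lt (hε : 0 < ε) (hα : 0 < α) {c x z : E}
    (h : dist z c < dist x c) : gaussianBump ε α c x < gaussianBump ε α c z := by
  simp only [dist_eq_norm] at h
  simp only [gaussianBump, neg_mul]
  gcongr

end NormedGroup

variable {E : Type*} [NormedAddCommGroup E] [InnerProductSpace ℝ E]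

/-- The inner product as a bilinear form. Over `ℝ` it coincides with `innerSL ℝ`, whose
conjugate-linear type prevents it from being added to bilinear forms. -/
noncomputable def innerForm : E →L[ℝ] E →L[ℝ] ℝ :=
  innerSL ℝ

@[simp]
theorem innerForm_apply (ξ η : E) : innerForm ξ η = inner ℝ ξ η :=
  rfl

theorem contDiff_gaussianBump (ε α : ℝ) (c : E) {n : WithTop ℕ∞} :
    ContDiff ℝ n (gaussianBump ε α c) :=
  contDiff_const.mul (contDiff_const.mul ((contDiff_id.sub contDiff_const).norm_sq ℝ)).exp

theorem hasFDerivAt_gaussianBump (ε α : ℝ) (c x : E) :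
    HasFDerivAt (gaussianBump ε α c) ((-2 * α * gaussianBump ε α c x) • innerForm (x - c)) x := by
  have h := ((((hasFDerivAt_id x).sub_const c).norm_sq.const_mul (-α)).exp).const_mul ε
  refine h.congr_fderiv ?_
  ext ξ
  simp only [gaussianBump, id_eq, ContinuousLinearMap.comp_id, smul_apply, coe_innerSL_apply,
    nsmul_eq_mul, Nat.cast_ofNat, smul_eq_mul, innerForm_apply]
  ring

theorem fderiv_fderiv_gaussianBump (ε α : ℝ) (c x : E) :
    fderiv ℝ (fderiv ℝ (gaussianBump ε α c)) x = gaussianBump ε α c x •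
      ((4 * α ^ 2) • (innerForm (x - c)).smulRight (innerForm (x - c)) - (2 * α) • innerForm) := by
  have hfirst : fderiv ℝ (gaussianBump ε α c) =
      fun x ↦ (-2 * α * gaussianBump ε α c x) • innerForm (x - c) :=
    funext fun x ↦ (hasFDerivAt_gaussianBump ε α c x).fderiv
  have hinner : HasFDerivAt (fun x : E ↦ innerForm (x - c)) innerForm x :=
    innerForm.hasFDerivAt.comp x ((hasFDerivAt_id x).sub_const c)
  rw [hfirst, (((hasFDerivAt_gaussianBump ε α c x).const_mul (-2 * α)).fun_smul hinner).fderiv]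
  refine ContinuousLinearMap.ext fun ξ ↦ ContinuousLinearMap.ext fun η ↦ ?_
  simp only [add_apply, sub_apply, smul_apply, ContinuousLinearMap.smulRight_apply,
    innerForm_apply, smul_eq_mul]
  ring

end Barrier

section Touching

theorem dist_lt_of_dist_midpoint_le {E : Type*} [NormedAddCommGroup E] [InnerProductSpace ℝ E]
    {x y z : E} (hx : dist x (midpoint ℝ y z) ≤ dist z (midpoint ℝ y z)) (hxz : x ≠ z) :
    dist y x < dist y z := by
  set c := midpoint ℝ y z with hc
  have hyc : ‖y - c‖ = dist y z / 2 := by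
    rw [hc, ← dist_eq_norm, dist_left_midpoint, norm_two]; ring
  have hxc : ‖x - c‖ ≤ dist y z / 2 := by
    rwa [← hyc, ← dist_eq_norm, ← dist_eq_norm, hc, dist_left_midpoint_eq_dist_right_midpoint]
  have hsum : x - c + (y - c) = x - z := by
    rw [hc, midpoint_eq_smul_add, invOf_eq_inv]; module
  have hpar := parallelogram_law_with_norm ℝ (x - c) (y - c)
  rw [hsum, sub_sub_sub_cancel_right, hyc, ← dist_eq_norm x y, dist_comm x y] at hpar
  have hpos : 0 < ‖x - z‖ := norm_sub_pos_iff.2 hxz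
  refine lt_of_pow_lt_pow_left₀ 2 dist_nonneg ?_
  nlinarith [norm_nonneg (x - c)]

variable {E : Type*} [NormedAddCommGroup E] [InnerProductSpace ℝ E] [ProperSpace E]

theorem exists_closedBall_midpoint_inter_eq_singleton {Z : Set E} (hZ : IsClosed Z)
    (hne : Z.Nonempty) (y : E) : ∃ z, infDist y Z = dist y z ∧
      closedBall (midpoint ℝ y z) (dist z (midpoint ℝ y z)) ∩ Z = {z} := by
  obtain ⟨z, hz, hyz⟩ := hZ.exists_infDist_eq_dist hne y
  refine ⟨z, hyz, Subset.antisymm (fun x hx ↦ ?_)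
    (singleton_subset_iff.2 ⟨mem_closedBall.2 le_rfl, hz⟩)⟩
  by_contra hxz
  exact (dist_lt_of_dist_midpoint_le hx.1 hxz).not_ge (hyz ▸ infDist_le_dist_of_mem hx.2)

theorem exists_isLocalMin_sub_gaussianBump {w : E → ℝ} {c z : E} {α ρ : ℝ} (hα : 0 < α)
    (hρ : 0 ≤ ρ) (hw : ContinuousOn w (closedBall z ρ)) (hnonneg : ∀ x ∈ sphere z ρ, 0 ≤ w x)
    (hz : w z = 0) (hpos : ∀ x ∈ sphere z ρ, dist x c ≤ dist z c → 0 < w x) :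
    ∃ ε > 0, ∃ x ∈ ball z ρ, IsLocalMin (w - gaussianBump ε α c) x := by
  have hcompact : IsCompact (sphere z ρ ∩ closedBall c (dist z c)) :=
    (isCompact_sphere z ρ).inter_right isClosed_closedBall
  obtain ⟨ε, hε, hεw⟩ := hcompact.exists_forall_le'
    (hw.mono (inter_subset_left.trans sphere_subset_closedBall)) fun x hx ↦ hpos x hx.1 hx.2
  refine ⟨ε, hε, exists_isLocalMin_mem_ball
    (hw.sub (contDiff_gaussianBump ε α c (n := 0)).continuous.continuousOn)
    (mem_closedBall_self hρ) fun x hx ↦ ?_⟩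
  simp only [Pi.sub_apply, hz]
  rcases le_or_gt (dist x c) (dist z c) with hxc | hxc
  · linarith [hεw x ⟨hx, hxc⟩, gaussianBump_le hε.le hα.le c x, gaussianBump_pos hε α c z]
  · linarith [hnonneg x hx, gaussianBump_lt_of_dist_lt hε hα hxc]

end Touching

section StrongMinimumPrinciple

variable {E : Type*} [NormedAddCommGroup E] [InnerProductSpace ℝ E]

/-- Ellipticity of the principal part `B ↦ ∑ aᵢⱼ Bᵢⱼ` of a second-order operator at a point, viewed
as a linear functional `L` on bilinear forms: it is nonnegative on positive semidefinite forms,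
with `lam` a lower bound for the eigenvalues of `(aᵢⱼ)` and `Lam` an upper bound for its trace.
Forms are not assumed symmetric; `nonneg` forces `L` to vanish on antisymmetric ones. -/
structure IsElliptic (lam Lam : ℝ) (L : (E →L[ℝ] E →L[ℝ] ℝ) →ₗ[ℝ] ℝ) : Prop where
  nonneg : ∀ B : E →L[ℝ] E →L[ℝ] ℝ, (∀ ξ, 0 ≤ B ξ ξ) → 0 ≤ L B
  le_apply_inner_sq : ∀ η : E, lam * ‖η‖ ^ 2 ≤ L ((innerForm η).smulRight (innerForm η))
  apply_inner_le : L innerForm ≤ Lam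

theorem IsElliptic.le_of_isLocalMin_sub_gaussianBump {L : (E →L[ℝ] E →L[ℝ] ℝ) →ₗ[ℝ] ℝ}
    {lam Lam C ε α : ℝ} {w : E → ℝ} {c x : E} (hL : IsElliptic lam Lam L) (hε : 0 < ε)
    (hα : 0 < α) (hw : ContDiffAt ℝ 2 w x) (hmin : IsLocalMin (w - gaussianBump ε α c) x)
    (hLw : L (fderiv ℝ (fderiv ℝ w) x) ≤ C * ‖fderiv ℝ w x‖) :
    2 * α * lam * ‖x - c‖ ^ 2 ≤ Lam + C * ‖x - c‖ := by
  have hbump : ContDiffAt ℝ 2 (gaussianBump ε α c) x := (contDiff_gaussianBump ε α c).contDiffAt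
  set h := gaussianBump ε α c x with hh
  have hpos : 0 < h := gaussianBump_pos hε α c x
  have hgrad : ‖fderiv ℝ w x‖ = 2 * α * h * ‖x - c‖ := by
    have hcrit := hmin.fderiv_eq_zero
    rw [(fderiv_sub_eventuallyEq hw hbump).self_of_nhds, Pi.sub_apply, sub_eq_zero,
      (hasFDerivAt_gaussianBump ε α c x).fderiv, ← hh] at hcrit
    rw [hcrit, norm_smul, innerForm, innerSL_apply_norm, norm_mul, norm_mul, norm_neg, norm_two,
      norm_of_nonneg hα.le, norm_of_nonneg hpos.le]
  have hhess : h * (4 * α ^ 2 * (lam * ‖x - c‖ ^ 2) - 2 * α * Lam) ≤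
      L (fderiv ℝ (fderiv ℝ w) x) := by
    have hmono : 0 ≤ L (fderiv ℝ (fderiv ℝ (w - gaussianBump ε α c)) x) :=
      hL.nonneg _ (fderiv_fderiv_apply_self_nonneg_of_isLocalMin (hw.sub hbump) hmin)
    rw [fderiv_fderiv_sub hw hbump, map_sub L _ _, sub_nonneg, fderiv_fderiv_gaussianBump, map_smul,
      map_sub L _ _, map_smul, map_smul, ← hh] at hmono
    simp only [smul_eq_mul] at hmono
    refine le_trans ?_ hmono
    gcongr
    · exact hL.le_apply_inner_sq _
    · exact hL.apply_inner_le
  rw [hgrad] at hLw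
  refine le_of_mul_le_mul_left ?_ (by positivity : 0 < 2 * α * h)
  linarith

variable [ProperSpace E] {w : E → ℝ} {L : E → (E →L[ℝ] E →L[ℝ] ℝ) →ₗ[ℝ] ℝ} {lam Lam C : ℝ}

theorem frequently_eq_zero_of_isElliptic {c z : E} (hcz : c ≠ z) (hlam : 0 < lam)
    (hL : ∀ᶠ x in 𝓝 z, IsElliptic lam Lam (L x)) (hw : ContDiffAt ℝ 2 w z)
    (hnonneg : ∀ᶠ x in 𝓝 z, 0 ≤ w x) (hz : w z = 0)
    (hLw : ∀ᶠ x in 𝓝 z, L x (fderiv ℝ (fderiv ℝ w) x) ≤ C * ‖fderiv ℝ w x‖) :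
    ∃ᶠ x in 𝓝[≠] z, x ∈ closedBall c (dist z c) ∧ w x = 0 := by
  by_contra hfreq
  rw [not_frequently, eventually_nhdsWithin_iff] at hfreq
  have hs : 0 < dist z c := dist_pos.2 hcz.symm
  obtain ⟨ρ, hρ, hball⟩ := nhds_basis_closedBall.eventually_iff.1
    (hfreq.and (hL.and ((hw.eventually (by simp)).and (hnonneg.and
      (hLw.and (closedBall_mem_nhds z (half_pos hs)))))))
  have hpos : ∀ x ∈ sphere z ρ, dist x c ≤ dist z c → 0 < w x := fun x hx hxc ↦ by
    obtain ⟨hne, -, -, hwx, -⟩ := hball (sphere_subset_closedBall hx)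
    exact hwx.lt_of_ne' fun h0 ↦ hne (ne_of_mem_sphere hx hρ.ne') ⟨hxc, h0⟩
  obtain ⟨α, hα, hαbig⟩ := exists_pos_lt_mul (by positivity : 0 < 2 * lam * (dist z c / 2) ^ 2)
    (Lam + |C| * (2 * dist z c))
  obtain ⟨ε, hε, x, hx, hmin⟩ := exists_isLocalMin_sub_gaussianBump hα hρ.le
    (fun x hx ↦ (hball hx).2.2.1.continuousAt.continuousWithinAt)
    (fun x hx ↦ (hball (sphere_subset_closedBall hx)).2.2.2.1) hz hpos
  obtain ⟨-, hLx, hwx, -, hLwx, hxz⟩ := hball (ball_subset_closedBall hx)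
  have hupper : dist x c ≤ 2 * dist z c := by linarith [dist_triangle x z c]
  have hlower : dist z c / 2 ≤ dist x c := by linarith [dist_triangle_left z c x]
  have hbound := hLx.le_of_isLocalMin_sub_gaussianBump hε hα hwx hmin hLwx
  rw [← dist_eq_norm] at hbound
  have hLHS : 2 * α * lam * (dist z c / 2) ^ 2 ≤ 2 * α * lam * dist x c ^ 2 := by gcongr
  have hRHS : C * dist x c ≤ |C| * (2 * dist z c) := by gcongr; exact le_abs_self C
  linarith

theorem eventuallyEq_zero_of_isElliptic {p : E} (hlam : 0 < lam)
    (hL : ∀ᶠ x in 𝓝 p, IsElliptic lam Lam (L x)) (hw : ContDiffAt ℝ 2 w p)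
    (hnonneg : ∀ᶠ x in 𝓝 p, 0 ≤ w x) (hp : w p = 0)
    (hLw : ∀ᶠ x in 𝓝 p, L x (fderiv ℝ (fderiv ℝ w) x) ≤ C * ‖fderiv ℝ w x‖) :
    w =ᶠ[𝓝 p] 0 := by
  obtain ⟨R, hR, hball⟩ := nhds_basis_closedBall.eventually_iff.1
    ((hw.eventually (by simp)).and
      (hL.eventually_nhds.and (hnonneg.eventually_nhds.and hLw.eventually_nhds)))
  have hclosed : IsClosed (closedBall p R ∩ w ⁻¹' {0}) :=
    ContinuousOn.preimage_isClosed_of_isClosed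
      (fun x hx ↦ (hball hx).1.continuousAt.continuousWithinAt) isClosed_closedBall
      isClosed_singleton
  have hpZ : p ∈ closedBall p R ∩ w ⁻¹' {0} := ⟨mem_closedBall_self hR.le, hp⟩
  filter_upwards [ball_mem_nhds p (half_pos hR)] with y hy
  by_contra hwy
  obtain ⟨z, hyz, htouch⟩ := exists_closedBall_midpoint_inter_eq_singleton hclosed ⟨p, hpZ⟩ y
  obtain ⟨-, hzR, hz⟩ := htouch.ge rfl
  have hzp : dist z p < R := by
    have hyzp : dist y z ≤ dist y p := hyz ▸ infDist_le_dist_of_mem hpZ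
    linarith [dist_triangle_left z p y, mem_ball.1 hy]
  have hcz : midpoint ℝ y z ≠ z := by
    rw [Ne, midpoint_eq_right_iff]
    rintro rfl
    exact hwy hz
  obtain ⟨hwz, hLz, hnonnegz, hLwz⟩ := hball hzR
  have hnear : ∀ᶠ x in 𝓝[≠] z, x ∈ ball p R ∧ x ≠ z :=
    (eventually_nhdsWithin_of_eventually_nhds (isOpen_ball.eventually_mem hzp)).and
      self_mem_nhdsWithin
  obtain ⟨x, ⟨hxc, hwx⟩, hxR, hxz⟩ :=
    ((frequently_eq_zero_of_isElliptic hcz hlam hLz hwz hnonnegz hz hLwz).and_eventually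
      hnear).exists
  exact hxz (htouch.le ⟨hxc, ball_subset_closedBall hxR, hwx⟩)

end StrongMinimumPrinciple

section Quasilinear

variable {E : Type*} [NormedAddCommGroup E] [InnerProductSpace ℝ E]

theorem norm_gradient_sub_gradient [CompleteSpace E] (u v : E → ℝ) (x : E) :
    ‖∇ u x - ∇ v x‖ = ‖fderiv ℝ u x - fderiv ℝ v x‖ := by
  rw [gradient, gradient, ← map_sub, LinearIsometryEquiv.norm_map]

theorem differentiableAt_gradient_of_contDiffAt [CompleteSpace E] {u : E → ℝ} {x : E}
    (hu : ContDiffAt ℝ 2 u x) : DifferentiableAt ℝ (∇ u) x :=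
  (InnerProductSpace.toDual ℝ E).symm.differentiableAt.comp x
    (hasFDerivAt_fderiv_of_contDiffAt hu).differentiableAt

theorem inner_fderiv_gradient_apply [CompleteSpace E] {u : E → ℝ} {x : E}
    (hu : ContDiffAt ℝ 2 u x) (ξ η : E) :
    inner ℝ (fderiv ℝ (∇ u) x ξ) η = fderiv ℝ (fderiv ℝ u) x ξ η := by
  have hgrad := (differentiableAt_gradient_of_contDiffAt hu).hasFDerivAt.inner ℝ
    (hasFDerivAt_const η x)
  have hfd := (hasFDerivAt_fderiv_of_contDiffAt hu).clm_apply (hasFDerivAt_const η x)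
  simp only [inner_gradient_left] at hgrad
  simpa using DFunLike.congr_fun (hgrad.unique hfd) ξ

theorem continuousAt_fderiv_fderiv_of_contDiffAt {u : E → ℝ} {x : E} (hu : ContDiffAt ℝ 2 u x) :
    ContinuousAt (fderiv ℝ (fderiv ℝ u)) x :=
  ((hu.fderiv_right (m := 1) (by norm_num)).fderiv_right (m := 0) (by norm_num)).continuousAt

theorem eventuallyEq_of_quasilinear_le [ProperSpace E] {u v : E → ℝ} {p : E}
    {Q : E → (E →L[ℝ] E →L[ℝ] ℝ) →ₗ[ℝ] ℝ} {lam Lam : ℝ} (hlam : 0 < lam)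
    (hell : ∀ᶠ q in 𝓝 (∇ v p), IsElliptic lam Lam (Q q))
    (hQ : ContDiffAt ℝ 1 (fun y : E × (E →L[ℝ] E →L[ℝ] ℝ) ↦ Q y.1 y.2)
      (∇ v p, fderiv ℝ (fderiv ℝ v) p))
    (hu : ContDiffAt ℝ 2 u p) (hv : ContDiffAt ℝ 2 v p)
    (huv : ∀ᶠ x in 𝓝 p, v x ≤ u x) (htouch : u p = v p)
    (hle : ∀ᶠ x in 𝓝 p,
      Q (∇ u x) (fderiv ℝ (fderiv ℝ u) x) ≤ Q (∇ v x) (fderiv ℝ (fderiv ℝ v) x)) :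
    u =ᶠ[𝓝 p] v := by
  have hmin : IsLocalMin (u - v) p := by
    filter_upwards [huv] with x hx
    simpa [htouch] using hx
  have hgrad : ∇ u p = ∇ v p := by
    rw [← sub_eq_zero, ← norm_eq_zero, norm_gradient_sub_gradient, norm_eq_zero,
      ← hmin.fderiv_eq_zero]
    exact (fderiv_sub_eventuallyEq hu hv).self_of_nhds.symm
  have hgrad_u := hgrad ▸ (differentiableAt_gradient_of_contDiffAt hu).continuousAt.tendsto
  have hgrad_v := (differentiableAt_gradient_of_contDiffAt hv).continuousAt.tendsto
  have hhess_v := (continuousAt_fderiv_fderiv_of_contDiffAt hv).tendsto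
  obtain ⟨K, t, ht, hlip⟩ := hQ.exists_lipschitzOnWith
  have hineq : ∀ᶠ x in 𝓝 p, Q (∇ u x) (fderiv ℝ (fderiv ℝ (u - v)) x) ≤
      K * ‖fderiv ℝ (u - v) x‖ := by
    filter_upwards [hle, (hgrad_u.prodMk_nhds hhess_v).eventually ht,
      (hgrad_v.prodMk_nhds hhess_v).eventually ht, fderiv_sub_eventuallyEq hu hv,
      hu.eventually (by simp), hv.eventually (by simp)] with x hQx hux hvx hfd hux2 hvx2
    have hlipx := hlip.dist_le_mul _ hvx _ hux
    rw [fderiv_fderiv_sub hux2 hvx2, map_sub (Q _) _ _, hfd, Pi.sub_apply,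
      ← norm_gradient_sub_gradient]
    rw [Prod.dist_eq, dist_self, max_eq_left dist_nonneg, Real.dist_eq, dist_comm,
      dist_eq_norm] at hlipx
    linarith [le_of_abs_le hlipx]
  have hzero : u - v =ᶠ[𝓝 p] 0 :=
    eventuallyEq_zero_of_isElliptic hlam (hgrad_u.eventually hell) (hu.sub hv)
      (by filter_upwards [huv] with x hx using sub_nonneg.2 hx) (sub_eq_zero.2 htouch) hineq
  filter_upwards [hzero] with x hx using sub_eq_zero.1 hx

end Quasilinear

section MeanCurvature

theorem inv_sqrt_sq_mul_self {a : ℝ} (ha : 0 < a) : (√a)⁻¹ ^ 2 * a = 1 := by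
  rw [inv_pow, sq_sqrt ha.le, inv_mul_cancel₀ ha.ne']

theorem hasFDerivAt_inv_sqrt_one_add_norm_sq_smul {E F : Type*} [NormedAddCommGroup E]
    [NormedSpace ℝ E] [NormedAddCommGroup F] [InnerProductSpace ℝ F] {G : E → F} {G' : E →L[ℝ] F}
    {x : E} (hG : HasFDerivAt G G' x) :
    HasFDerivAt (fun y ↦ (√(1 + ‖G y‖ ^ 2))⁻¹ • G y)
      ((√(1 + ‖G x‖ ^ 2))⁻¹ • G' -
        (√(1 + ‖G x‖ ^ 2))⁻¹ ^ 3 • ((innerForm (G x)).comp G').smulRight (G x)) x := by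
  have hpos : 0 < 1 + ‖G x‖ ^ 2 := by positivity
  have hsqrt : √(1 + ‖G x‖ ^ 2) ≠ 0 := (sqrt_pos.2 hpos).ne'
  have hinv := (hasDerivAt_inv hsqrt).comp_hasFDerivAt x ((hG.norm_sq.const_add 1).sqrt hpos.ne')
  refine (hinv.smul hG).congr_fderiv (ContinuousLinearMap.ext fun ξ ↦ ?_)
  simp only [add_apply, sub_apply, smul_apply, neg_apply, ContinuousLinearMap.smulRight_apply,
    ContinuousLinearMap.comp_apply, innerForm_apply, innerSL_apply_apply, smul_eq_mul, neg_smul,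
    Function.comp_apply]
  module

variable {E ι : Type*} [NormedAddCommGroup E] [InnerProductSpace ℝ E] [Fintype ι]

/-- The mean curvature operator in non-divergence form, as a function of the gradient `p` and the
Hessian `B`: `(1 + |p|²)^(-3/2) ((1 + |p|²) tr B - B(p, p))`, the trace being computed in the
orthonormal basis `b`. -/
noncomputable def meanCurvatureForm (b : OrthonormalBasis ι ℝ E) (p : E) :
    (E →L[ℝ] E →L[ℝ] ℝ) →ₗ[ℝ] ℝ where
  toFun B := (√(1 + ‖p‖ ^ 2))⁻¹ ^ 3 * ((1 + ‖p‖ ^ 2) * ∑ i, B (b i) (b i) - B p p)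
  map_add' B B' := by
    simp only [add_apply, Finset.sum_add_distrib]
    ring
  map_smul' r B := by
    simp only [smul_apply, smul_eq_mul, ← Finset.mul_sum, RingHom.id_apply]
    ring

variable (b : OrthonormalBasis ι ℝ E)

theorem meanCurvatureForm_apply (p : E) (B : E →L[ℝ] E →L[ℝ] ℝ) :
    meanCurvatureForm b p B =
      (√(1 + ‖p‖ ^ 2))⁻¹ ^ 3 * ((1 + ‖p‖ ^ 2) * ∑ i, B (b i) (b i) - B p p) :=
  rfl

theorem contDiff_meanCurvatureForm {n : WithTop ℕ∞} :
    ContDiff ℝ n fun y : E × (E →L[ℝ] E →L[ℝ] ℝ) ↦ meanCurvatureForm b y.1 y.2 := by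
  have hsq : ContDiff ℝ n fun y : E × (E →L[ℝ] E →L[ℝ] ℝ) ↦ 1 + ‖y.1‖ ^ 2 :=
    contDiff_const.add (contDiff_fst.norm_sq ℝ)
  simp only [meanCurvatureForm_apply]
  refine (((hsq.sqrt fun y ↦ by positivity).inv fun y ↦ by positivity).pow 3).mul
    ((hsq.mul (ContDiff.sum fun i _ ↦ ?_)).sub ?_)
  all_goals fun_prop

theorem sum_inner_mul_apply (f : E →L[ℝ] ℝ) (p : E) :
    ∑ i, inner ℝ (b i) p * f (b i) = f p := by
  conv_rhs => rw [← b.sum_repr' p, map_sum]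
  simp only [map_smul, smul_eq_mul]

theorem apply_self_le_norm_sq_mul_sum {B : E →L[ℝ] E →L[ℝ] ℝ} (hB : ∀ ξ, 0 ≤ B ξ ξ) (p : E) :
    B p p ≤ ‖p‖ ^ 2 * ∑ i, B (b i) (b i) := by
  rcases eq_or_ne p 0 with rfl | hp
  · simp
  -- These vectors are `‖p‖²` times the components of the `b i` orthogonal to `p`.
  have hexpand : ∑ i, B (‖p‖ ^ 2 • b i - inner ℝ (b i) p • p) (‖p‖ ^ 2 • b i - inner ℝ (b i) p • p)
      = ‖p‖ ^ 2 * (‖p‖ ^ 2 * ∑ i, B (b i) (b i) - B p p) := by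
    have hleft : ∑ i, inner ℝ (b i) p * B (b i) p = B p p := sum_inner_mul_apply b (B.flip p) p
    have hright : ∑ i, inner ℝ (b i) p * B p (b i) = B p p := sum_inner_mul_apply b (B p) p
    have hnorm : ∑ i, inner ℝ (b i) p ^ 2 = ‖p‖ ^ 2 := by
      simpa using b.sum_sq_norm_inner_right p
    calc
      _ = ∑ i, (‖p‖ ^ 4 * B (b i) (b i) - ‖p‖ ^ 2 * (inner ℝ (b i) p * B (b i) p)
            - ‖p‖ ^ 2 * (inner ℝ (b i) p * B p (b i)) + inner ℝ (b i) p ^ 2 * B p p) := by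
        refine Finset.sum_congr rfl fun i _ ↦ ?_
        simp only [map_sub, map_smul, sub_apply, smul_apply, smul_eq_mul]
        ring
      _ = _ := by
        rw [Finset.sum_add_distrib, Finset.sum_sub_distrib, Finset.sum_sub_distrib,
          ← Finset.mul_sum, ← Finset.mul_sum, ← Finset.mul_sum, ← Finset.sum_mul, hleft, hright,
          hnorm]
        ring
  have hpos : 0 < ‖p‖ ^ 2 := by positivity
  exact sub_nonneg.1 (nonneg_of_mul_nonneg_right
    (hexpand ▸ Finset.sum_nonneg fun i _ ↦ hB _) hpos)

theorem isElliptic_meanCurvatureForm {p : E} {M : ℝ} (hp : ‖p‖ ≤ M) :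
    IsElliptic ((√(1 + M ^ 2))⁻¹ ^ 3) (Fintype.card ι) (meanCurvatureForm b p) where
  nonneg B hB := by
    have htrace : 0 ≤ ∑ i, B (b i) (b i) := Finset.sum_nonneg fun i _ ↦ hB (b i)
    rw [meanCurvatureForm_apply]
    refine mul_nonneg (by positivity) ?_
    linarith [apply_self_le_norm_sq_mul_sum b hB p]
  le_apply_inner_sq η := by
    have htrace : ∑ i, inner ℝ η (b i) * inner ℝ η (b i) = ‖η‖ ^ 2 := by
      simpa [← sq] using b.sum_sq_norm_inner_left η
    have hcs : inner ℝ η p * inner ℝ η p ≤ ‖η‖ ^ 2 * ‖p‖ ^ 2 := by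
      rw [← mul_pow, ← sq, ← sq_abs]
      gcongr
      exact abs_real_inner_le_norm η p
    simp only [meanCurvatureForm_apply, ContinuousLinearMap.smulRight_apply, smul_apply,
      innerForm_apply, smul_eq_mul, htrace]
    gcongr
    linarith
  apply_inner_le := by
    have hsq := inv_sqrt_sq_mul_self (show 0 < 1 + ‖p‖ ^ 2 by positivity)
    have hle : (√(1 + ‖p‖ ^ 2))⁻¹ ≤ 1 := inv_le_one_of_one_le₀ (one_le_sqrt.2 (by simp))
    simp only [meanCurvatureForm_apply, innerForm_apply, real_inner_self_eq_norm_sq, b.norm_eq_one,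
      one_pow, Finset.sum_const, Finset.card_univ, nsmul_eq_mul, mul_one]
    calc
      _ ≤ (√(1 + ‖p‖ ^ 2))⁻¹ ^ 3 * ((1 + ‖p‖ ^ 2) * Fintype.card ι) := by
        gcongr
        exact sub_le_self _ (by positivity)
      _ = (√(1 + ‖p‖ ^ 2))⁻¹ * Fintype.card ι := by
        linear_combination (√(1 + ‖p‖ ^ 2))⁻¹ * Fintype.card ι * hsq
      _ ≤ Fintype.card ι := mul_le_of_le_one_left (by positivity) hle

theorem sum_inner_fderiv_inv_sqrt_smul_gradient [CompleteSpace E] {u : E → ℝ} {x : E}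
    (hu : ContDiffAt ℝ 2 u x) :
    ∑ i, inner ℝ (fderiv ℝ (fun y ↦ (√(1 + ‖∇ u y‖ ^ 2))⁻¹ • ∇ u y) x (b i)) (b i) =
      meanCurvatureForm b (∇ u x) (fderiv ℝ (fderiv ℝ u) x) := by
  set B := fderiv ℝ (fderiv ℝ u) x
  set p := ∇ u x
  have hgrad := (differentiableAt_gradient_of_contDiffAt hu).hasFDerivAt
  have hsq := inv_sqrt_sq_mul_self (show 0 < 1 + ‖p‖ ^ 2 by positivity)
  have hterm (i : ι) :
      inner ℝ (fderiv ℝ (fun y ↦ (√(1 + ‖∇ u y‖ ^ 2))⁻¹ • ∇ u y) x (b i)) (b i) =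
      (√(1 + ‖p‖ ^ 2))⁻¹ * B (b i) (b i) -
        (√(1 + ‖p‖ ^ 2))⁻¹ ^ 3 * (inner ℝ (b i) p * B (b i) p) := by
    rw [(hasFDerivAt_inv_sqrt_one_add_norm_sq_smul hgrad).fderiv]
    simp only [sub_apply, smul_apply, ContinuousLinearMap.smulRight_apply, innerForm_apply,
      ContinuousLinearMap.comp_apply, inner_sub_left, real_inner_smul_left]
    rw [inner_fderiv_gradient_apply hu, real_inner_comm _ p, inner_fderiv_gradient_apply hu,
      real_inner_comm _ p]
    ring
  have hradial : ∑ i, inner ℝ (b i) p * B (b i) p = B p p := sum_inner_mul_apply b (B.flip p) p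
  simp only [hterm, Finset.sum_sub_distrib, ← Finset.mul_sum, hradial, meanCurvatureForm_apply]
  linear_combination -(√(1 + ‖p‖ ^ 2))⁻¹ * (∑ i, B (b i) (b i)) * hsq

end MeanCurvature

section Plane

variable {u v : EuclideanSpace ℝ (Fin 2) → ℝ} {x : EuclideanSpace ℝ (Fin 2)}

theorem cmcOp_eq_meanCurvatureForm (hu : ContDiffAt ℝ 2 u x) :
    cmcOp u x = meanCurvatureForm (EuclideanSpace.basisFun (Fin 2) ℝ) (∇ u x)
      (fderiv ℝ (fderiv ℝ u) x) := by
  rw [← sum_inner_fderiv_inv_sqrt_smul_gradient _ hu]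
  simp [cmcOp, vecDiv, EuclideanSpace.inner_single_right]

theorem cmcOp_congr (h : u =ᶠ[𝓝 x] v) : cmcOp u x = cmcOp v x := by
  have hfield : (fun y ↦ (√(1 + ‖∇ u y‖ ^ 2))⁻¹ • ∇ u y) =ᶠ[𝓝 x]
      fun y ↦ (√(1 + ‖∇ v y‖ ^ 2))⁻¹ • ∇ v y :=
    h.gradient.fun_comp fun p ↦ (√(1 + ‖p‖ ^ 2))⁻¹ • p
  simp only [cmcOp, vecDiv, hfield.fderiv_eq]

theorem interior_tangency_principle_general (hu : ContDiffAt ℝ 2 u x) (hv : ContDiffAt ℝ 2 v x)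
    (huv : ∀ᶠ y in 𝓝 x, v y ≤ u y) (htouch : u x = v x)
    (hcmc : ∀ᶠ y in 𝓝 x, cmcOp u y ≤ cmcOp v y) : u =ᶠ[𝓝 x] v := by
  set b := EuclideanSpace.basisFun (Fin 2) ℝ
  have hbounded : ∀ᶠ q in 𝓝 (∇ v x), ‖q‖ ≤ ‖∇ v x‖ + 1 :=
    continuous_norm.continuousAt.eventually_le_const (lt_add_one _)
  refine eventuallyEq_of_quasilinear_le (Q := meanCurvatureForm b) (by positivity)
    (hbounded.mono fun _ ↦ isElliptic_meanCurvatureForm b)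
    (contDiff_meanCurvatureForm b).contDiffAt hu hv huv htouch ?_
  filter_upwards [hcmc, hu.eventually (by simp), hv.eventually (by simp)] with y hy huy hvy
  rwa [← cmcOp_eq_meanCurvatureForm huy, ← cmcOp_eq_meanCurvatureForm hvy]

end Plane

/-- Interior tangency principle for constant-mean-curvature graphs. -/
theorem interior_tangency_principle
    (Ω : Set (EuclideanSpace ℝ (Fin 2))) (hΩopen : IsOpen Ω) (hΩconn : IsConnected Ω)
    (p₀ : EuclideanSpace ℝ (Fin 2)) (hp₀ : p₀ ∈ Ω)
    (u v : EuclideanSpace ℝ (Fin 2) → ℝ)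
    (hu : ContDiffOn ℝ 2 u Ω) (hv : ContDiffOn ℝ 2 v Ω)
    (huv : ∀ x ∈ Ω, v x ≤ u x) (htouch : u p₀ = v p₀)
    (H₁ H₂ : ℝ) (hH : H₁ ≤ H₂)
    (hpdeu : ∀ x ∈ Ω, cmcOp u x = 2 * H₁)
    (hpdev : ∀ x ∈ Ω, cmcOp v x = 2 * H₂) :
    (∃ V : Set (EuclideanSpace ℝ (Fin 2)),
        IsOpen V ∧ p₀ ∈ V ∧ V ⊆ Ω ∧ Set.EqOn u v V) ∧ H₁ = H₂ := by
  have hnhds : Ω ∈ 𝓝 p₀ := hΩopen.mem_nhds hp₀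
  have hcmc : ∀ᶠ x in 𝓝 p₀, cmcOp u x ≤ cmcOp v x := by
    filter_upwards [hnhds] with x hx
    rw [hpdeu x hx, hpdev x hx]
    linarith
  have heq : u =ᶠ[𝓝 p₀] v := interior_tangency_principle_general (hu.contDiffAt hnhds)
    (hv.contDiffAt hnhds) (mem_of_superset hnhds huv) htouch hcmc
  obtain ⟨V, hV, hVopen, hpV⟩ := _root_.mem_nhds_iff.1 (inter_mem hnhds heq)
  refine ⟨⟨V, hVopen, hpV, fun x hx ↦ (hV hx).1, fun x hx ↦ (hV hx).2⟩, ?_⟩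
  linarith [cmcOp_congr heq, hpdeu p₀ hp₀, hpdev p₀ hp₀]
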